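/- If X is a standard normal random variable and a ≠ 0, then the variance of Snake_a(X) = X + sin²(aX)/a equals 1 + (1 + e^{-8a²} - 2e^{-4a²})/(8a²). -/

import Mathlib

open MeasureTheory ProbabilityTheory

lemma integrable_cos_gauss (t : ℝ) :
    Integrable (fun x => Real.cos (t * x)) (gaussianReal 0 1) := by
  refine Integrable.of_bound (C := 1) (by fun_prop) (Filter.Eventually.of_forall fun x => ?_)
  simpa using Real.abs_cos_le_one (t * x)

lemma integral_cos_gauss (t : ℝ) :
    ∫ x, Real.cos (t * x) ∂(gaussianReal 0 1) = Real.exp (-t ^ 2 / 2) := by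
  have h := charFun_gaussianReal (μ := 0) (v := 1) t
  rw [charFun_apply_real] at h
  have hi : Integrable (fun x : ℝ => Complex.exp (t * x * Complex.I)) (gaussianReal 0 1) := by
    refine Integrable.of_bound (C := 1) (by fun_prop) (Filter.Eventually.of_forall fun x => ?_)
    rw [← Complex.ofReal_mul, Complex.norm_exp_ofReal_mul_I]
  have h2 := congrArg Complex.re h
  have h3 := integral_re hi
  simp only [RCLike.re_eq_complex_re] at h3
  rw [← h3] at h2
  have e1 : ∀ x : ℝ, (Complex.exp (t * x * Complex.I)).re = Real.cos (t * x) := by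
    intro x
    rw [← Complex.ofReal_mul, Complex.exp_ofReal_mul_I_re]
  simp only [e1] at h2
  rw [h2, ← Complex.exp_ofReal_re]
  congr 2
  push_cast
  ring

lemma integral_odd_gauss (a : ℝ) :
    ∫ x, x * Real.sin (a * x) ^ 2 ∂(gaussianReal 0 1) = 0 := by
  have h : (gaussianReal 0 1).map (fun x : ℝ => -x) = gaussianReal 0 1 := by
    simpa using gaussianReal_map_neg (μ := 0) (v := 1)
  have h2 : ∫ x, x * Real.sin (a * x) ^ 2 ∂(gaussianReal 0 1)
      = ∫ x, (-x) * Real.sin (a * (-x)) ^ 2 ∂(gaussianReal 0 1) := by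
    conv_lhs => rw [← h]
    rw [integral_map (by fun_prop) (by fun_prop)]
  have h3 : ∀ x : ℝ, (-x) * Real.sin (a * (-x)) ^ 2 = -(x * Real.sin (a * x) ^ 2) := by
    intro x
    rw [mul_neg, Real.sin_neg]; ring
  simp only [h3, integral_neg] at h2
  linarith

/-- For a standard normal `X` and `a ≠ 0`, the variance of
`Snake_a(X) = X + sin²(aX)/a` is `1 + (1 + e^{-8a²} - 2e^{-4a²})/(8a²)`. -/
theorem variance_snake_gaussian (a : ℝ) (ha : a ≠ 0) :
    variance (fun x => x + Real.sin (a * x) ^ 2 / a) (gaussianReal 0 1)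
      = 1 + (1 + Real.exp (-8 * a ^ 2) - 2 * Real.exp (-4 * a ^ 2)) / (8 * a ^ 2) := by
  have hX : MemLp (fun x : ℝ => x) 2 (gaussianReal 0 1) :=
    memLp_id_gaussianReal' 2 (by simp)
  have hS : MemLp (fun x : ℝ => Real.sin (a * x) ^ 2) 2 (gaussianReal 0 1) := by
    refine MemLp.of_bound (by fun_prop) 1 (Filter.Eventually.of_forall fun x => ?_)
    rw [Real.norm_eq_abs, abs_of_nonneg (sq_nonneg _)]
    exact Real.sin_sq_le_one _
  have hY : MemLp (fun x : ℝ => Real.sin (a * x) ^ 2 / a) 2 (gaussianReal 0 1) := by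
    simpa only [div_eq_mul_inv] using hS.mul_const a⁻¹
  have hc2 := integral_cos_gauss (2 * a)
  have hc4 := integral_cos_gauss (4 * a)
  have i2 := integrable_cos_gauss (2 * a)
  have i4 := integrable_cos_gauss (4 * a)
  have eq2 : ∀ x : ℝ, Real.sin (a * x) ^ 2 = 1 / 2 - 1 / 2 * Real.cos (2 * a * x) := by
    intro x
    rw [mul_assoc, Real.cos_two_mul, Real.cos_sq']; ring
  have eq4 : ∀ x : ℝ, (Real.sin (a * x) ^ 2) ^ 2
      = 3 / 8 - 1 / 2 * Real.cos (2 * a * x) + 1 / 8 * Real.cos (4 * a * x) := by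
    intro x
    have : Real.cos (4 * a * x) = 2 * Real.cos (2 * a * x) ^ 2 - 1 := by
      rw [← Real.cos_two_mul]; ring_nf
    rw [eq2, this]; ring
  have hE2 : ∫ x, Real.sin (a * x) ^ 2 ∂(gaussianReal 0 1)
      = 1 / 2 - 1 / 2 * Real.exp (-(2 * a) ^ 2 / 2) := by
    simp only [eq2]
    rw [integral_sub (integrable_const _) (i2.const_mul _), integral_const_mul, hc2]
    simp
  have hE4 : ∫ x, (Real.sin (a * x) ^ 2) ^ 2 ∂(gaussianReal 0 1)
      = 3 / 8 - 1 / 2 * Real.exp (-(2 * a) ^ 2 / 2) + 1 / 8 * Real.exp (-(4 * a) ^ 2 / 2) := by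
    simp only [eq4]
    have i3 : Integrable (fun x : ℝ => 3 / 8 - 1 / 2 * Real.cos (2 * a * x))
        (gaussianReal 0 1) := (integrable_const _).sub (i2.const_mul _)
    rw [integral_add i3 (i4.const_mul _),
      integral_sub (integrable_const _) (i2.const_mul _), integral_const_mul,
      integral_const_mul, hc2, hc4]
    simp
  have hvS : variance (fun x : ℝ => Real.sin (a * x) ^ 2) (gaussianReal 0 1)
      = 1 / 8 * (1 + Real.exp (-8 * a ^ 2) - 2 * Real.exp (-4 * a ^ 2)) := by
    rw [variance_eq_sub hS]
    simp only [Pi.pow_apply]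
    rw [hE4, hE2]
    have e1 : Real.exp (-4 * a ^ 2) = Real.exp (-(2 * a) ^ 2 / 2) ^ 2 := by
      rw [← Real.exp_nat_mul]; congr 1; push_cast; ring
    have e2 : Real.exp (-8 * a ^ 2) = Real.exp (-(4 * a) ^ 2 / 2) := by
      congr 1; ring
    rw [e1, e2]; ring
  have hcov : covariance (fun x : ℝ => x) (fun x : ℝ => Real.sin (a * x) ^ 2 / a)
      (gaussianReal 0 1) = 0 := by
    rw [covariance_eq_sub hX hY]
    simp only [Pi.mul_apply, ← mul_div_assoc, integral_div, integral_odd_gauss,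
      integral_id_gaussianReal]
    simp
  have hvY : variance (fun x : ℝ => Real.sin (a * x) ^ 2 / a) (gaussianReal 0 1)
      = (1 / a) ^ 2 * variance (fun x : ℝ => Real.sin (a * x) ^ 2) (gaussianReal 0 1) := by
    rw [← variance_const_mul]
    congr 1
    ext x
    ring
  rw [variance_fun_add hX hY, hcov, variance_fun_id_gaussianReal, hvY, hvS]
  simp
  field_simp
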